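/- Let A ⊆ B(H) be an operator algebra with the complete reduction property (H^(∞) has the reduction property). If V₁, V₂ are closed A-submodules of H and there exists a non-zero bounded A-module map from V₁ to V₂, then there exists a non-zero bounded A-module map from V₂ to V₁. -/

import Mathlib

/-!
Choose scalars `dₙ ≠ 0` with `dₙ → 0` and let `V ⊆ ℓᵖ(ℕ, E)` be the direct sum of the graphs of the
multiples `dₙ⁻¹ T`. By complete reduction `V` is the range of a bounded projection `P` commuting
with the amplified algebra, so the matrix entries of `P` commute with `A`, and those in even rows
map into the domain of `T`. If all of them vanished at `T x`, then `P` would kill the second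
summand of `(x, dₙ⁻¹ T x)`, hence send `(x, 0)` to `(x, dₙ⁻¹ T x)`: thus
`‖dₙ⁻¹ T x‖ ≤ ‖P‖ ‖x‖` for all `n`, which forces `T x = 0`.
-/

section

open Filter Topology
open scoped ENNReal lp

theorem isClosed_linearPMap_mk {R E F : Type*} [CommRing R] [AddCommGroup E] [Module R E]
    [TopologicalSpace E] [AddCommGroup F] [Module R F] [TopologicalSpace F] [T2Space F]
    {V : Submodule R E} (hV : IsClosed (V : Set E)) (T : V →L[R] F) :
    LinearPMap.IsClosed ⟨V, (T : V →ₗ[R] F)⟩ := by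
  have hgraph : IsClosed {z : V × F | T z.1 = z.2} :=
    isClosed_eq (T.continuous.comp continuous_fst) continuous_snd
  have hmap := (hV.isClosedEmbedding_subtypeVal.prodMap (.id (X := F))).isClosedMap _ hgraph
  rw [LinearPMap.IsClosed]
  convert! hmap
  ext ⟨x, y⟩
  simp [LinearPMap.mem_graph_iff]

variable {𝕜 E : Type*} [NontriviallyNormedField 𝕜] [NormedAddCommGroup E] [NormedSpace 𝕜 E]
  {p : ℝ≥0∞}

section Amplification

variable {ι : Type*}

variable (p ι) in
/-- The amplification of an operator `a` to `ℓᵖ(ι, E)`, acting coordinatewise by `a`. Only its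
linear structure is recorded, since invariance of subspaces does not involve its continuity. -/
def amplification (a : E →L[𝕜] E) : Module.End 𝕜 ℓ^p(ι, E) where
  toFun ξ := ⟨fun i => a (ξ i),
    ((lp.memℓp ξ).norm.const_mul ‖a‖).mono fun i => a.le_opNorm (ξ i)⟩
  map_add' ξ η := by ext i; exact map_add a (ξ i) (η i)
  map_smul' c ξ := by ext i; exact map_smul a c (ξ i)

@[simp]
theorem amplification_apply (a : E →L[𝕜] E) (ξ : ℓ^p(ι, E)) (i : ι) :
    amplification p ι a ξ i = a (ξ i) :=
  rfl

theorem mem_invtSubmodule_amplification_iff {a : E →L[𝕜] E} {V : Submodule 𝕜 ℓ^p(ι, E)} :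
    V ∈ Module.End.invtSubmodule (amplification p ι a) ↔
      ∀ ξ ∈ V, ∀ η : ℓ^p(ι, E), (∀ i, η i = a (ξ i)) → η ∈ V := by
  refine ⟨fun h ξ hξ η hη => ?_, fun h ξ hξ => h ξ hξ _ fun i => rfl⟩
  have hη_eq : η = amplification p ι a ξ := lp.ext (funext hη)
  exact hη_eq ▸ h hξ

variable [DecidableEq ι]

theorem amplification_single (a : E →L[𝕜] E) (i : ι) (x : E) :
    amplification p ι a (lp.single p i x) = lp.single p i (a x) := by
  ext j
  exact Pi.apply_single (fun _ => a) (fun _ => map_zero a) i x j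

variable [Fact (1 ≤ p)]

/-- The `(i, j)` entry of an operator on `ℓᵖ(ι, E)`, viewed as a matrix of operators on `E`. -/
noncomputable def matrixEntry (P : ℓ^p(ι, E) →L[𝕜] ℓ^p(ι, E)) (i j : ι) : E →L[𝕜] E :=
  lp.evalCLM 𝕜 (fun _ => E) p i ∘L P ∘L lp.singleContinuousLinearMap 𝕜 (fun _ => E) p j

theorem matrixEntry_apply (P : ℓ^p(ι, E) →L[𝕜] ℓ^p(ι, E)) (i j : ι) (x : E) :
    matrixEntry P i j x = P (lp.single p j x) i :=
  rfl

theorem matrixEntry_mem_centralizer {A : Set (E →L[𝕜] E)} {P : ℓ^p(ι, E) →L[𝕜] ℓ^p(ι, E)}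
    (hP : ∀ a ∈ A, Commute (P : Module.End 𝕜 ℓ^p(ι, E)) (amplification p ι a)) (i j : ι) :
    matrixEntry P i j ∈ A.centralizer := by
  intro a ha
  ext x
  have h := LinearMap.congr_fun (hP a ha).eq (lp.single p j x)
  simp only [Module.End.mul_apply, amplification_single] at h
  exact congr($h.symm i)

end Amplification

section CompleteReduction

variable [Fact (1 ≤ p)]

variable (p) in
/-- The complete reduction property of a set `A` of operators on `E`, with `ℓᵖ(ℕ, E)` in the role
of the infinite amplification: every closed invariant subspace of `ℓᵖ(ℕ, E)` has a closed invariant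
complement. -/
def HasCompleteReductionProperty (A : Set (E →L[𝕜] E)) : Prop :=
  ∀ V : Submodule 𝕜 ℓ^p(ℕ, E), IsClosed (V : Set ℓ^p(ℕ, E)) →
    (∀ a ∈ A, V ∈ Module.End.invtSubmodule (amplification p ℕ a)) →
    ∃ W : Submodule 𝕜 ℓ^p(ℕ, E), IsClosed (W : Set ℓ^p(ℕ, E)) ∧
      (∀ a ∈ A, W ∈ Module.End.invtSubmodule (amplification p ℕ a)) ∧ IsCompl V W

theorem hasCompleteReductionProperty_iff {A : Set (E →L[𝕜] E)} :
    HasCompleteReductionProperty p A ↔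
      ∀ V : Submodule 𝕜 ℓ^p(ℕ, E), IsClosed (V : Set ℓ^p(ℕ, E)) →
        (∀ a ∈ A, ∀ ξ ∈ V, ∀ η : ℓ^p(ℕ, E), (∀ i, η i = a (ξ i)) → η ∈ V) →
        ∃ W : Submodule 𝕜 ℓ^p(ℕ, E), IsClosed (W : Set ℓ^p(ℕ, E)) ∧
          (∀ a ∈ A, ∀ ξ ∈ W, ∀ η : ℓ^p(ℕ, E), (∀ i, η i = a (ξ i)) → η ∈ W) ∧
          V ⊓ W = ⊥ ∧ V ⊔ W = ⊤ := by
  simp only [HasCompleteReductionProperty, mem_invtSubmodule_amplification_iff, isCompl_iff,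
    disjoint_iff, codisjoint_iff]

theorem HasCompleteReductionProperty.exists_projection [CompleteSpace E] {A : Set (E →L[𝕜] E)}
    (hA : HasCompleteReductionProperty p A) {V : Submodule 𝕜 ℓ^p(ℕ, E)}
    (hVc : IsClosed (V : Set ℓ^p(ℕ, E)))
    (hVA : ∀ a ∈ A, V ∈ Module.End.invtSubmodule (amplification p ℕ a)) :
    ∃ P : ℓ^p(ℕ, E) →L[𝕜] ℓ^p(ℕ, E), (∀ ξ, P ξ ∈ V) ∧ (∀ ξ ∈ V, P ξ = ξ) ∧
      ∀ a ∈ A, Commute (P : Module.End 𝕜 ℓ^p(ℕ, E)) (amplification p ℕ a) := by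
  obtain ⟨W, hWc, hWA, hVW⟩ := hA V hVc hVA
  have h := Submodule.IsCompl.isTopCompl_of_isClosed hVW hVc hWc
  refine ⟨V.projectionL W h, Submodule.projectionL_apply_mem h,
    fun ξ => (Submodule.projectionL_eq_self_iff h ξ).2, fun a ha => ?_⟩
  have hidem := ContinuousLinearMap.IsIdempotentElem.toLinearMap
    (Submodule.isIdempotentElem_projectionL h)
  refine (LinearMap.IsIdempotentElem.commute_iff hidem).2 ⟨?_, ?_⟩
  · simpa only [Submodule.range_projectionL] using hVA a ha
  · simpa only [Submodule.ker_projectionL] using hWA a ha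

end CompleteReduction

section GraphSum

variable (p) in
/-- The `ℓᵖ`-direct sum of the graphs of the operators `(d n)⁻¹ • T`, for nonzero scalars `d n`.
The `n`-th summand occupies the coordinates `2 * n` (argument) and `2 * n + 1` (value). Scaling the
value by `d n` instead of `T` by `(d n)⁻¹` makes each condition the preimage of the same subspace
`T.graph`. -/
noncomputable def graphSum (T : E →ₗ.[𝕜] E) (d : ℕ → 𝕜) : Submodule 𝕜 ℓ^p(ℕ, E) :=
  ⨅ n, T.graph.comap ((lp.evalₗ (fun _ => E) p (2 * n)).prod
    (d n • lp.evalₗ (fun _ => E) p (2 * n + 1)))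

variable {T : E →ₗ.[𝕜] E} {d : ℕ → 𝕜}

theorem mem_graphSum {ξ : ℓ^p(ℕ, E)} :
    ξ ∈ graphSum p T d ↔ ∀ n, (ξ (2 * n), d n • ξ (2 * n + 1)) ∈ T.graph :=
  Submodule.mem_iInf _

theorem graphSum_mem_invtSubmodule {a : E →L[𝕜] E}
    (ha : ∀ x : T.domain, (a x, a (T x)) ∈ T.graph) :
    graphSum p T d ∈ Module.End.invtSubmodule (amplification p ℕ a) := by
  intro ξ hξ
  refine mem_graphSum.2 fun n => ?_
  obtain ⟨x, hx, hTx⟩ := (LinearPMap.mem_graph_iff T).1 (mem_graphSum.1 hξ n)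
  simpa [hx, hTx] using ha x

theorem eq_zero_of_mem_graphSum_of_even_eq_zero (hd : ∀ n, d n ≠ 0) {ξ : ℓ^p(ℕ, E)}
    (hξ : ξ ∈ graphSum p T d) (heven : ∀ n, ξ (2 * n) = 0) : ξ = 0 := by
  have hodd (n : ℕ) : ξ (2 * n + 1) = 0 :=
    (smul_eq_zero_iff_right (hd n)).1 (T.graph_fst_eq_zero_snd (mem_graphSum.1 hξ n) (heven n))
  ext i
  obtain ⟨n, rfl | rfl⟩ := i.even_or_odd'
  exacts [heven n, hodd n]

theorem single_add_single_mem_graphSum {n : ℕ} {x y : E} (hxy : (x, d n • y) ∈ T.graph) :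
    lp.single p (2 * n) x + lp.single p (2 * n + 1) y ∈ graphSum p T d := by
  refine mem_graphSum.2 fun m => ?_
  obtain rfl | hmn := eq_or_ne m n
  · simpa [Pi.single_apply] using hxy
  · have hodd : 2 * m ≠ 2 * n + 1 := by omega
    have heven : 2 * m + 1 ≠ 2 * n := by omega
    simp [hmn, hodd, heven]

variable [Fact (1 ≤ p)]

theorem isClosed_graphSum (hT : T.IsClosed) : IsClosed (graphSum p T d : Set ℓ^p(ℕ, E)) := by
  have hcoord (n : ℕ) : Continuous fun ξ : ℓ^p(ℕ, E) => (ξ (2 * n), d n • ξ (2 * n + 1)) :=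
    (lp.evalCLM 𝕜 (fun _ => E) p (2 * n)).continuous.prodMk
      ((lp.evalCLM 𝕜 (fun _ => E) p (2 * n + 1)).continuous.const_smul (d n))
  rw [graphSum, Submodule.coe_iInf]
  exact isClosed_iInter fun n => hT.preimage (hcoord n)

theorem norm_le_of_apply_single_eq_zero {P : ℓ^p(ℕ, E) →L[𝕜] ℓ^p(ℕ, E)}
    (hP : ∀ ξ ∈ graphSum p T d, P ξ = ξ) {n : ℕ} {x y : E} (hxy : (x, d n • y) ∈ T.graph)
    (hy : P (lp.single p (2 * n + 1) y) = 0) : ‖y‖ ≤ ‖P‖ * ‖x‖ := by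
  have hp : 0 < p := zero_lt_one.trans_le Fact.out
  let u : ℓ^p(ℕ, E) := lp.single p (2 * n) x
  have hPu : P u = u + lp.single p (2 * n + 1) y := by
    rw [← hP _ (single_add_single_mem_graphSum hxy), map_add, hy, add_zero]
  calc ‖y‖ = ‖P u (2 * n + 1)‖ := by simp [hPu, u]
    _ ≤ ‖P u‖ := lp.norm_apply_le_norm hp.ne' _ _
    _ ≤ ‖P‖ * ‖u‖ := P.le_opNorm u
    _ = ‖P‖ * ‖x‖ := by rw [lp.norm_single hp]

end GraphSum

theorem intertwining_symmetric_general [CompleteSpace E] [Fact (1 ≤ p)] {A : Set (E →L[𝕜] E)}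
    (hA : HasCompleteReductionProperty p A) {T : E →ₗ.[𝕜] E} (hT : T.IsClosed)
    (hTA : ∀ a ∈ A, ∀ x : T.domain, (a x, a (T x)) ∈ T.graph) {x : T.domain} (hx : T x ≠ 0) :
    ∃ S ∈ A.centralizer, (∀ y, S y ∈ T.domain) ∧ S (T x) ≠ 0 := by
  by_contra! hS
  obtain ⟨c, hc_pos, hc_lt⟩ := NormedField.exists_norm_lt_one 𝕜
  have hc (n : ℕ) : c ^ n ≠ 0 := pow_ne_zero n (norm_pos_iff.1 hc_pos)
  obtain ⟨P, hP_mem, hP_id, hPA⟩ := hA.exists_projection (isClosed_graphSum (d := (c ^ ·)) hT)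
    fun a ha => graphSum_mem_invtSubmodule (hTA a ha)
  have hentry (m k : ℕ) : matrixEntry P (2 * m) k (T x) = 0 :=
    hS _ (matrixEntry_mem_centralizer hPA _ _) fun y =>
      T.mem_domain_of_mem_graph (mem_graphSum.1 (hP_mem (lp.single p k y)) m)
  have hker (n : ℕ) : P (lp.single p (2 * n + 1) ((c ^ n)⁻¹ • T x)) = 0 :=
    eq_zero_of_mem_graphSum_of_even_eq_zero hc (hP_mem _) fun m => by
      rw [← matrixEntry_apply, map_smul, hentry, smul_zero]
  have hbound (n : ℕ) : ‖T x‖ ≤ ‖c‖ ^ n * (‖P‖ * ‖(x : E)‖) := by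
    have hgraph : ((x : E), c ^ n • (c ^ n)⁻¹ • T x) ∈ T.graph := by
      simpa only [smul_inv_smul₀ (hc n)] using T.mem_graph x
    have h := norm_le_of_apply_single_eq_zero hP_id hgraph (hker n)
    rwa [norm_smul, norm_inv, norm_pow, inv_mul_le_iff₀ (pow_pos hc_pos n)] at h
  have hlim : Tendsto (fun n => ‖c‖ ^ n * (‖P‖ * ‖(x : E)‖)) atTop (𝓝 0) := by
    simpa using (tendsto_pow_atTop_nhds_zero_of_lt_one (norm_nonneg c) hc_lt).mul_const _
  exact hx (norm_le_zero_iff.1 (ge_of_tendsto' hlim hbound))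

end

/-- for an operator algebra `A ⊆ B(H)` with the complete reduction property
(the amplification `H ⊗ ℓ²` has the reduction property), the intertwining relation between
closed submodules is symmetric: if there is a non-zero bounded module map `V₁ → V₂` then
there is a non-zero bounded module map `V₂ → V₁`. -/
theorem intertwining_symmetric
    {H : Type*} [NormedAddCommGroup H] [InnerProductSpace ℂ H] [CompleteSpace H]
    (A : Subalgebra ℂ (H →L[ℂ] H))
    (hcrp : ∀ V : Submodule ℂ (lp (fun _ : ℕ => H) 2), IsClosed (V : Set (lp (fun _ : ℕ => H) 2)) →
      (∀ a ∈ A, ∀ ξ ∈ V, ∀ η : lp (fun _ : ℕ => H) 2, (∀ i, η i = a (ξ i)) → η ∈ V) →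
      ∃ W : Submodule ℂ (lp (fun _ : ℕ => H) 2), IsClosed (W : Set (lp (fun _ : ℕ => H) 2)) ∧
        (∀ a ∈ A, ∀ ξ ∈ W, ∀ η : lp (fun _ : ℕ => H) 2, (∀ i, η i = a (ξ i)) → η ∈ W) ∧
        V ⊓ W = ⊥ ∧ V ⊔ W = ⊤)
    (V₁ V₂ : Submodule ℂ H)
    (h1c : IsClosed (V₁ : Set H)) (h2c : IsClosed (V₂ : Set H))
    (h1inv : ∀ a ∈ A, ∀ x ∈ V₁, a x ∈ V₁) (h2inv : ∀ a ∈ A, ∀ x ∈ V₂, a x ∈ V₂)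
    (T : V₁ →L[ℂ] H) (hT0 : T ≠ 0) (hTrange : ∀ ξ : V₁, T ξ ∈ V₂)
    (hTmod : ∀ a ∈ A, ∀ (ξ : V₁) (h : a (ξ : H) ∈ V₁), T ⟨a ξ, h⟩ = a (T ξ)) :
    ∃ S : V₂ →L[ℂ] H, S ≠ 0 ∧ (∀ ξ : V₂, S ξ ∈ V₁) ∧
      ∀ a ∈ A, ∀ (ξ : V₂) (h : a (ξ : H) ∈ V₂), S ⟨a ξ, h⟩ = a (S ξ) := by
  obtain ⟨ξ, hξ⟩ := DFunLike.ne_iff.1 hT0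
  obtain ⟨S, hSA, hSV, hSξ⟩ := intertwining_symmetric_general (A := (A : Set (H →L[ℂ] H)))
    (hasCompleteReductionProperty_iff.2 hcrp) (isClosed_linearPMap_mk h1c T)
    (fun a ha x => (LinearPMap.mem_graph_iff _).2 ⟨⟨a x, h1inv a ha x x.2⟩, rfl, hTmod a ha x _⟩)
    hξ
  exact ⟨S ∘L V₂.subtypeL, fun h => hSξ congr($h ⟨T ξ, hTrange ξ⟩), fun y => hSV y,
    fun a ha y _ => congr($(hSA a ha) y).symm⟩
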